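/- If ξ is a horizontal nonholonomic symmetry (a constant section of 𝔤^F) whose action additionally leaves the Lagrangian form invariant, 𝓛_{j¹ξ_Y}(L·η) = 0, then for any solution φ of the nonholonomic field equations the associated momentum is conserved: (j¹φ)*(d J^{n.h.}_ξ) = 0, where J^{n.h.}_ξ = j¹ξ_Y ⌟ Θ_L. -/

import Mathlib

open scoped BigOperators

/-- Coordinate indices of `J¹π`. -/
abbrev Idx (n m : ℕ) : Type := Fin (n + 1) ⊕ (Fin m ⊕ Fin m × Fin (n + 1))

abbrev Jet1 (n m : ℕ) : Type := Idx n m → ℝ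
abbrev Base (n : ℕ) : Type := Fin (n + 1) → ℝ

/-- Coordinates of the total space `Y`. -/
abbrev YC (n m : ℕ) : Type := (Fin (n + 1) ⊕ Fin m) → ℝ

/-- Projection `π_{1,0} : J¹π → Y` in coordinates. -/
def pr10 (n m : ℕ) (p : Jet1 n m) : YC n m :=
  fun i => p (Sum.elim Sum.inl (fun a => Sum.inr (Sum.inl a)) i)

/-- First jet prolongation `j¹φ` of a section `φ`, in coordinates. -/
noncomputable def jetProlong (n m : ℕ) (φ : Base n → Fin m → ℝ) (x : Base n) : Jet1 n m :=
  Sum.elim x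
    (Sum.elim (fun a => φ x a)
      (fun aμ : Fin m × Fin (n + 1) =>
        fderiv ℝ (fun x' => φ x' aμ.1) x (Pi.single aμ.2 1)))

/-- Total derivative `d/dx^ν` on functions of `(x,y)`, evaluated at a jet `p`. -/
noncomputable def totalDY (n m : ℕ) (ν : Fin (n + 1)) (g : YC n m → ℝ) (p : Jet1 n m) : ℝ :=
  fderiv ℝ g (pr10 n m p) (Pi.single (Sum.inl ν) 1)
    + ∑ b : Fin m, p (Sum.inr (Sum.inr (b, ν))) *
        fderiv ℝ g (pr10 n m p) (Pi.single (Sum.inr b) 1)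

/-- First jet prolongation of a vector field `Z` on `Y`. -/
noncomputable def prolongY (n m : ℕ) (Z : YC n m → YC n m) (p : Jet1 n m) : Jet1 n m :=
  Sum.elim (fun μ => Z (pr10 n m p) (Sum.inl μ))
    (Sum.elim (fun a => Z (pr10 n m p) (Sum.inr a))
      (fun aν : Fin m × Fin (n + 1) =>
        totalDY n m aν.2 (fun y => Z y (Sum.inr aν.1)) p
          - ∑ μ : Fin (n + 1), p (Sum.inr (Sum.inr (aν.1, μ))) *
              totalDY n m aν.2 (fun y => Z y (Sum.inl μ)) p))

/-- The contact one-form `θ^a = dy^a - y^a_μ dx^μ` at `p`, evaluated on a vector. -/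
def thetaVec (n m : ℕ) (a : Fin m) (p : Jet1 n m) (v : Jet1 n m) : ℝ :=
  v (Sum.inr (Sum.inl a)) - ∑ μ : Fin (n + 1), p (Sum.inr (Sum.inr (a, μ))) * v (Sum.inl μ)

/-- The `(n+1)`-form `θ^a ∧ d^n x_μ` at `p`. -/
noncomputable def thetaWedge (n m : ℕ) (a : Fin m) (μ : Fin (n + 1)) (p : Jet1 n m)
    (vs : Fin (n + 1) → Jet1 n m) : ℝ :=
  (-1 : ℝ) ^ (μ : ℕ) *
    Matrix.det (Matrix.of fun i j =>
      (Fin.cons (thetaVec n m a p)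
        (fun k => fun v => v (Sum.inl (μ.succAbove k))) : Fin (n + 1) → Jet1 n m → ℝ) i (vs j))

/-- The volume form `η = d^{n+1}x`, evaluated on `n+1` vectors. -/
noncomputable def volForm (n m : ℕ) (vs : Fin (n + 1) → Jet1 n m) : ℝ :=
  Matrix.det (Matrix.of fun i j => vs j (Sum.inl i))

/-- The Poincaré–Cartan `(n+1)`-form
`Θ_L = (∂L/∂y^a_μ) θ^a ∧ d^n x_μ + L d^{n+1}x`. -/
noncomputable def pcForm (n m : ℕ) (L : Jet1 n m → ℝ) (p : Jet1 n m)
    (vs : Fin (n + 1) → Jet1 n m) : ℝ :=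
  (∑ a : Fin m, ∑ μ : Fin (n + 1),
      fderiv ℝ L p (Pi.single (Sum.inr (Sum.inr (a, μ))) 1) * thetaWedge n m a μ p vs)
    + L p * volForm n m vs

/-- Exterior derivative of a `k`-form (given as a function of a point and `k` constant
vectors). -/
noncomputable def dform (n m k : ℕ) (ω : Jet1 n m → (Fin k → Jet1 n m) → ℝ)
    (p : Jet1 n m) (vs : Fin (k + 1) → Jet1 n m) : ℝ :=
  ∑ i : Fin (k + 1), (-1 : ℝ) ^ (i : ℕ) *
    fderiv ℝ (fun q => ω q (fun j => vs (i.succAbove j))) p (vs i)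

/-- The Poincaré–Cartan `(n+2)`-form `Ω_L = -dΘ_L`. -/
noncomputable def pcOmega (n m : ℕ) (L : Jet1 n m → ℝ) (p : Jet1 n m)
    (vs : Fin (n + 2) → Jet1 n m) : ℝ :=
  -(dform n m (n + 1) (pcForm n m L) p vs)

/-- The component `J^{n.h.}_{ξ̄} = j¹ξ̃_Y ⌟ Θ_L` of the nonholonomic momentum map
associated with the vector field `Z = ξ̃_Y`, an `n`-form. -/
noncomputable def momentumMap (n m : ℕ) (L : Jet1 n m → ℝ) (Z : YC n m → YC n m)
    (p : Jet1 n m) (vs : Fin n → Jet1 n m) : ℝ :=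
  pcForm n m L p (Fin.cons (prolongY n m Z p) vs)

/-- Lie derivative of an `(n+1)`-form along a vector field `X` on `J¹π`. -/
noncomputable def lieForm (n m : ℕ) (X : Jet1 n m → Jet1 n m)
    (ω : Jet1 n m → (Fin (n + 1) → Jet1 n m) → ℝ) (p : Jet1 n m)
    (vs : Fin (n + 1) → Jet1 n m) : ℝ :=
  fderiv ℝ (fun q => ω q vs) p (X p)
    + ∑ k : Fin (n + 1), ω p (Function.update vs k (fderiv ℝ X p (vs k)))

/-- The Lagrangian `(n+1)`-form `L·η`. -/
noncomputable def lagForm (n m : ℕ) (L : Jet1 n m → ℝ) (p : Jet1 n m)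
    (vs : Fin (n + 1) → Jet1 n m) : ℝ :=
  L p * volForm n m vs

/-!
Cartan's formula gives `d(X ⌟ Θ_L) = 𝓛_X Θ_L + X ⌟ Ω_L` for `X = j¹ξ_Y`. Pulled back along
`j¹φ`, the last term vanishes by the field equations, `X` being an admissible variation. The
prolongation `X` preserves the contact ideal, so `𝓛_X` kills the contact part of `Θ_L` on vectors
tangent to `j¹φ`; what is left is the momentum equation
`(j¹φ)*(dJ) = (j¹φ)*(𝓛_X(L·η))`, whose right-hand side is zero by invariance.
-/

section LinearAlgebra

variable {E : Type*} [NormedAddCommGroup E] [NormedSpace ℝ E]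

theorem map_eq_sum_mul_map_single {ι : Type*} [Fintype ι] [DecidableEq ι]
    (f : (ι → ℝ) →L[ℝ] ℝ) (v : ι → ℝ) : f v = ∑ i, v i * f (Pi.single i 1) := by
  conv_lhs => rw [← Finset.univ_sum_single v, map_sum]
  refine Finset.sum_congr rfl fun i _ => ?_
  rw [← smul_eq_mul, ← map_smul, ← Pi.single_smul, smul_eq_mul, mul_one]

theorem neg_one_pow_mul_map_cons_removeNth {k : ℕ} (A : E [⋀^Fin (k + 1)]→L[ℝ] ℝ)
    (u : E) (vs : Fin (k + 1) → E) (i : Fin (k + 1)) :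
    (-1 : ℝ) ^ (i : ℕ) * A (Fin.cons u (i.removeNth vs)) = A (Function.update vs i u) := by
  have h := A.toAlternatingMap.map_insertNth i u (i.removeNth vs)
  rw [Fin.insertNth_removeNth] at h
  simpa [Matrix.vecCons] using h.symm

/-- The wedge product `l₀ ∧ ⋯ ∧ l_{k-1}` of one-forms, normalized so that its value on vectors is
the determinant of `l i (v j)`. -/
noncomputable def wedgeOneForms {k : ℕ} (l : Fin k → E →L[ℝ] ℝ) : E [⋀^Fin k]→L[ℝ] ℝ :=
  ContinuousAlternatingMap.compContinuousLinearMap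
    { (Matrix.detRowAlternating : (Fin k → ℝ) [⋀^Fin k]→ₗ[ℝ] ℝ) with
      cont := continuous_id.matrix_det }
    (ContinuousLinearMap.pi l)

theorem wedgeOneForms_apply {k : ℕ} (l : Fin k → E →L[ℝ] ℝ) (vs : Fin k → E) :
    wedgeOneForms l vs = Matrix.det (Matrix.of fun i j => l i (vs j)) := by
  rw [← Matrix.det_transpose]
  rfl

theorem differentiable_wedgeOneForms {G : Type*} [NormedAddCommGroup G] [NormedSpace ℝ G] {k : ℕ}
    {l : Fin k → G → E →L[ℝ] ℝ} (hl : ∀ i, Differentiable ℝ (l i)) :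
    Differentiable ℝ fun z => wedgeOneForms fun i => l i z := by
  have hpi : Differentiable ℝ fun z => ContinuousLinearMap.pi fun i => l i z := by
    have hsum : (fun z => ContinuousLinearMap.pi fun i => l i z) =
        fun z => ∑ i, (ContinuousLinearMap.single ℝ (fun _ : Fin k => ℝ) i).comp (l i z) := by
      ext z v i
      simp [Pi.single_apply]
    rw [hsum]
    exact Differentiable.fun_sum fun i _ => (differentiable_const _).clm_comp (hl i)
  exact fun z =>
    (differentiableAt_const _).continuousAlternatingMapCompContinuousLinearMap (hpi z)

end LinearAlgebra

theorem differentiable_fderiv_apply {E F : Type*} [NormedAddCommGroup E] [NormedSpace ℝ E]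
    [NormedAddCommGroup F] [NormedSpace ℝ F] {f : E → F} (hf : ContDiff ℝ 2 f) (v : E) :
    Differentiable ℝ fun x => fderiv ℝ f x v :=
  ((hf.fderiv_right (m := 1) (by norm_num)).differentiable one_ne_zero).clm_apply
    (differentiable_const v)

section AlternatingMapDeriv

variable {E G : Type*} [NormedAddCommGroup E] [NormedSpace ℝ E] [NormedAddCommGroup G]
  [NormedSpace ℝ G] {k : ℕ} {x : G}

theorem fderiv_alternatingMap_apply_const {ω : G → E [⋀^Fin k]→L[ℝ] ℝ}
    (hω : DifferentiableAt ℝ ω x) (v : G) (vs : Fin k → E) :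
    fderiv ℝ (fun y => ω y vs) x v = fderiv ℝ ω x v vs := by
  rw [fderiv_continuousAlternatingMap_apply_apply (g := fun i _ => vs i) hω
    fun i => differentiableAt_const _]
  simp

theorem fderiv_alternatingMap_apply_cons {ω : G → E [⋀^Fin (k + 1)]→L[ℝ] ℝ} {X : G → E}
    (hω : DifferentiableAt ℝ ω x) (hX : DifferentiableAt ℝ X x) (v : G) (vs : Fin k → E) :
    fderiv ℝ (fun y => ω y (Fin.cons (X y) vs)) x v
      = fderiv ℝ ω x v (Fin.cons (X x) vs) + ω x (Fin.cons (fderiv ℝ X x v) vs) := by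
  have hg (i : Fin (k + 1)) :
      DifferentiableAt ℝ (fun y => (Fin.cons (X y) vs : Fin (k + 1) → E) i) x :=
    Fin.cases hX (fun j => differentiableAt_const (vs j)) i
  rw [fderiv_continuousAlternatingMap_apply_apply hω hg v, Fin.sum_univ_succ]
  simp

end AlternatingMapDeriv

section Cartan

variable {n m : ℕ}

/-- The interior product `X ⌟ ω`, with `X` inserted in the first slot of `ω`. -/
def contractForm {k : ℕ} (X : Jet1 n m → Jet1 n m)
    (ω : Jet1 n m → (Fin (k + 1) → Jet1 n m) → ℝ) (p : Jet1 n m) (vs : Fin k → Jet1 n m) : ℝ :=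
  ω p (Fin.cons (X p) vs)

variable {p : Jet1 n m} {X : Jet1 n m → Jet1 n m}

theorem dform_contractForm {ω : Jet1 n m → Jet1 n m [⋀^Fin (n + 1)]→L[ℝ] ℝ}
    (hω : DifferentiableAt ℝ ω p) (hX : DifferentiableAt ℝ X p) (vs : Fin (n + 1) → Jet1 n m) :
    dform n m n (contractForm X fun q => ω q) p vs
      = lieForm n m X (fun q => ω q) p vs
        - contractForm X (dform n m (n + 1) fun q => ω q) p vs := by
  have hterm (i : Fin (n + 1)) :
      (-1 : ℝ) ^ (i : ℕ) * fderiv ℝ (fun q => contractForm X (fun q => ω q) q (i.removeNth vs)) p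
          (vs i)
        = (-1 : ℝ) ^ (i : ℕ) * fderiv ℝ ω p (vs i) (Fin.cons (X p) (i.removeNth vs))
          + ω p (Function.update vs i (fderiv ℝ X p (vs i))) := by
    simp only [contractForm]
    rw [fderiv_alternatingMap_apply_cons hω hX, mul_add,
      neg_one_pow_mul_map_cons_removeNth (ω p)]
  have hcons (i : Fin (n + 1)) :
      (fun j => (Fin.cons (X p) vs : Fin (n + 2) → Jet1 n m) (i.succ.succAbove j))
        = Fin.cons (X p) (i.removeNth vs) := Fin.cons_comp_succ_succAbove ..
  calc dform n m n (contractForm X fun q => ω q) p vs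
      = ∑ i : Fin (n + 1), (-1 : ℝ) ^ (i : ℕ) *
            fderiv ℝ ω p (vs i) (Fin.cons (X p) (i.removeNth vs))
          + ∑ i, ω p (Function.update vs i (fderiv ℝ X p (vs i))) := by
        rw [← Finset.sum_add_distrib]
        exact Finset.sum_congr rfl fun i _ => hterm i
    _ = _ := by
        simp only [lieForm, contractForm, dform, Fin.sum_univ_succ (n := n + 1), hcons,
          fderiv_alternatingMap_apply_const hω]
        simp only [Fin.val_zero, Fin.val_succ, Fin.cons_zero, Fin.cons_succ, Fin.zero_succAbove,
          pow_zero, pow_succ, one_mul, mul_one, mul_neg, neg_mul, Finset.sum_neg_distrib]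
        ring

end Cartan

section LieDerivative

variable {n m : ℕ} {X : Jet1 n m → Jet1 n m} {p : Jet1 n m} {vs : Fin (n + 1) → Jet1 n m}

theorem lieForm_add {ω₁ ω₂ : Jet1 n m → (Fin (n + 1) → Jet1 n m) → ℝ}
    (h₁ : DifferentiableAt ℝ (fun q => ω₁ q vs) p) (h₂ : DifferentiableAt ℝ (fun q => ω₂ q vs) p) :
    lieForm n m X (fun q ws => ω₁ q ws + ω₂ q ws) p vs
      = lieForm n m X ω₁ p vs + lieForm n m X ω₂ p vs := by
  simp only [lieForm, fderiv_fun_add h₁ h₂, add_apply, Finset.sum_add_distrib]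
  ring

theorem lieForm_sum {ι : Type*} (s : Finset ι)
    {ω : ι → Jet1 n m → (Fin (n + 1) → Jet1 n m) → ℝ}
    (h : ∀ i ∈ s, DifferentiableAt ℝ (fun q => ω i q vs) p) :
    lieForm n m X (fun q ws => ∑ i ∈ s, ω i q ws) p vs = ∑ i ∈ s, lieForm n m X (ω i) p vs := by
  simp only [lieForm, fderiv_fun_sum h, sum_apply, Finset.sum_add_distrib]
  rw [Finset.sum_comm]

theorem lieForm_mul {f : Jet1 n m → ℝ} {ω : Jet1 n m → (Fin (n + 1) → Jet1 n m) → ℝ}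
    (hf : DifferentiableAt ℝ f p) (hω : DifferentiableAt ℝ (fun q => ω q vs) p) :
    lieForm n m X (fun q ws => f q * ω q ws) p vs
      = fderiv ℝ f p (X p) * ω p vs + f p * lieForm n m X ω p vs := by
  simp only [lieForm, fderiv_fun_mul hf hω, add_apply, smul_apply, smul_eq_mul, Finset.mul_sum,
    mul_add]
  ring

end LieDerivative

section PoincareCartan

variable {n m : ℕ}

/-- The contact one-form `θ^a` of `thetaVec` as a field of continuous linear functionals, so that
it can be differentiated in operator norm. -/
noncomputable def contactOneForm (a : Fin m) (p : Jet1 n m) : Jet1 n m →L[ℝ] ℝ :=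
  ContinuousLinearMap.proj (Sum.inr (Sum.inl a))
    - ∑ μ : Fin (n + 1), p (Sum.inr (Sum.inr (a, μ))) • ContinuousLinearMap.proj (Sum.inl μ)

theorem contactOneForm_apply (a : Fin m) (p v : Jet1 n m) :
    contactOneForm a p v = thetaVec n m a p v := by
  simp [contactOneForm, thetaVec]

theorem differentiable_contactOneForm (a : Fin m) :
    Differentiable ℝ (contactOneForm (n := n) a) := by
  unfold contactOneForm
  fun_prop

/-- The form `θ^a ∧ d^n x_μ` of `thetaWedge` as a field of continuous alternating maps. -/
noncomputable def thetaWedgeForm (a : Fin m) (μ : Fin (n + 1)) (p : Jet1 n m) :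
    Jet1 n m [⋀^Fin (n + 1)]→L[ℝ] ℝ :=
  (-1 : ℝ) ^ (μ : ℕ) • wedgeOneForms
    (Fin.cons (contactOneForm a p) fun k => ContinuousLinearMap.proj (Sum.inl (μ.succAbove k)))

theorem thetaWedgeForm_apply (a : Fin m) (μ : Fin (n + 1)) (p : Jet1 n m)
    (vs : Fin (n + 1) → Jet1 n m) : thetaWedgeForm a μ p vs = thetaWedge n m a μ p vs := by
  rw [thetaWedgeForm, thetaWedge, ContinuousAlternatingMap.smul_apply, wedgeOneForms_apply,
    smul_eq_mul]
  congr 2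
  ext i j
  cases i using Fin.cases with
  | zero => exact contactOneForm_apply a p (vs j)
  | succ i => rfl

theorem differentiable_thetaWedgeForm (a : Fin m) (μ : Fin (n + 1)) :
    Differentiable ℝ (thetaWedgeForm (n := n) a μ) := by
  have hl (i : Fin (n + 1)) : Differentiable ℝ fun p : Jet1 n m =>
      (Fin.cons (contactOneForm a p) fun k => ContinuousLinearMap.proj (Sum.inl (μ.succAbove k)) :
        Fin (n + 1) → Jet1 n m →L[ℝ] ℝ) i := by
    cases i using Fin.cases with
    | zero => exact differentiable_contactOneForm a
    | succ i => exact differentiable_const _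
  exact (differentiable_wedgeOneForms hl).const_smul ((-1 : ℝ) ^ (μ : ℕ))

/-- The Poincaré–Cartan form `Θ_L` of `pcForm` as a field of continuous alternating maps. -/
noncomputable def poincareCartanForm (L : Jet1 n m → ℝ) (p : Jet1 n m) :
    Jet1 n m [⋀^Fin (n + 1)]→L[ℝ] ℝ :=
  (∑ a : Fin m, ∑ μ : Fin (n + 1),
      fderiv ℝ L p (Pi.single (Sum.inr (Sum.inr (a, μ))) 1) • thetaWedgeForm a μ p)
    + L p • wedgeOneForms fun i => ContinuousLinearMap.proj (Sum.inl i)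

theorem coe_poincareCartanForm (L : Jet1 n m → ℝ) :
    (fun p => ⇑(poincareCartanForm L p)) = pcForm n m L := by
  ext p vs
  simp [poincareCartanForm, pcForm, volForm, thetaWedgeForm_apply, wedgeOneForms_apply]

theorem differentiable_poincareCartanForm {L : Jet1 n m → ℝ} (hL : ContDiff ℝ 2 L) :
    Differentiable ℝ (poincareCartanForm L) :=
  (Differentiable.fun_sum fun a _ => Differentiable.fun_sum fun μ _ =>
    (differentiable_fderiv_apply hL _).smul (differentiable_thetaWedgeForm a μ)).add
      ((hL.differentiable two_ne_zero).smul_const _)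

end PoincareCartan

section Contact

variable {n m : ℕ}

/-- The tangent vector `v` at `p` lies in the contact distribution, the common kernel of all
`θ^a`. -/
def IsContactVector (p v : Jet1 n m) : Prop :=
  ∀ a, thetaVec n m a p v = 0

theorem IsContactVector.fiber_eq {p w : Jet1 n m} (hw : IsContactVector p w) (b : Fin m) :
    w (Sum.inr (Sum.inl b)) = ∑ μ, p (Sum.inr (Sum.inr (b, μ))) * w (Sum.inl μ) :=
  sub_eq_zero.1 (hw b)

/-- The coefficient of `θ^a(v_j)` in the expansion of the determinant `(θ^a ∧ d^n x_μ)(v)` along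
its first row; it depends neither on `a` nor on the base point. -/
noncomputable def thetaWedgeCofactor (μ j : Fin (n + 1)) (vs : Fin (n + 1) → Jet1 n m) : ℝ :=
  (-1 : ℝ) ^ (μ + j : ℕ) *
    Matrix.det (Matrix.of fun i k : Fin n => vs (j.succAbove k) (Sum.inl (μ.succAbove i)))

theorem thetaWedgeCofactor_update (μ j : Fin (n + 1)) (vs : Fin (n + 1) → Jet1 n m)
    (u : Jet1 n m) :
    thetaWedgeCofactor μ j (Function.update vs j u) = thetaWedgeCofactor μ j vs := by
  simp [thetaWedgeCofactor, Fin.succAbove_ne]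

theorem thetaWedge_eq_sum (a : Fin m) (μ : Fin (n + 1)) (p : Jet1 n m)
    (vs : Fin (n + 1) → Jet1 n m) :
    thetaWedge n m a μ p vs = ∑ j, thetaVec n m a p (vs j) * thetaWedgeCofactor μ j vs := by
  rw [thetaWedge, Matrix.det_succ_row_zero, Finset.mul_sum]
  refine Finset.sum_congr rfl fun j _ => ?_
  simp only [thetaWedgeCofactor, pow_add]
  change _ * (_ * thetaVec n m a p (vs j) * Matrix.det (Matrix.of fun i k : Fin n =>
    vs (j.succAbove k) (Sum.inl (μ.succAbove i)))) = _
  ring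

theorem thetaWedge_eq_zero_of_isContactVector (a : Fin m) (μ : Fin (n + 1)) {p : Jet1 n m}
    {ws : Fin (n + 1) → Jet1 n m} (hw : ∀ j, IsContactVector p (ws j)) :
    thetaWedge n m a μ p ws = 0 := by
  simp [thetaWedge_eq_sum, hw _ a]

theorem thetaWedge_update_of_isContactVector (a : Fin m) (μ : Fin (n + 1)) {p : Jet1 n m}
    {ws : Fin (n + 1) → Jet1 n m} (hw : ∀ j, IsContactVector p (ws j)) (k : Fin (n + 1))
    (u : Jet1 n m) :
    thetaWedge n m a μ p (Function.update ws k u)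
      = thetaVec n m a p u * thetaWedgeCofactor μ k ws := by
  rw [thetaWedge_eq_sum, Fintype.sum_eq_single k fun j hj => by
    rw [Function.update_of_ne hj, hw j a, zero_mul]]
  rw [Function.update_self, thetaWedgeCofactor_update]

theorem differentiable_thetaVec (a : Fin m) (w : Jet1 n m) :
    Differentiable ℝ fun q => thetaVec n m a q w := by
  unfold thetaVec
  fun_prop

theorem fderiv_thetaVec (a : Fin m) (p w u : Jet1 n m) :
    fderiv ℝ (fun q => thetaVec n m a q w) p u
      = -∑ μ, u (Sum.inr (Sum.inr (a, μ))) * w (Sum.inl μ) := by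
  let ℓ : Jet1 n m →L[ℝ] ℝ :=
    ∑ μ, w (Sum.inl μ) • ContinuousLinearMap.proj (Sum.inr (Sum.inr (a, μ)))
  have hℓ : (fun q => thetaVec n m a q w) = fun q => w (Sum.inr (Sum.inl a)) - ℓ q := by
    ext q
    simp [thetaVec, ℓ, mul_comm]
  rw [hℓ, fderiv_const_sub, ℓ.fderiv]
  simp [ℓ, mul_comm]

/-- The vector field `X` preserves the contact distribution at `p` infinitesimally: each Lie
derivative `𝓛_X θ^a` vanishes there on contact vectors. -/
def IsInfinitesimalContact (X : Jet1 n m → Jet1 n m) (p : Jet1 n m) : Prop :=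
  ∀ a w, IsContactVector p w →
    fderiv ℝ (fun q => thetaVec n m a q w) p (X p) + thetaVec n m a p (fderiv ℝ X p w) = 0

variable {X : Jet1 n m → Jet1 n m} {p : Jet1 n m} {ws : Fin (n + 1) → Jet1 n m}

theorem IsInfinitesimalContact.lieForm_thetaWedge (hX : IsInfinitesimalContact X p)
    (a : Fin m) (μ : Fin (n + 1)) (hw : ∀ j, IsContactVector p (ws j)) :
    lieForm n m X (thetaWedge n m a μ) p ws = 0 := by
  have hderiv : fderiv ℝ (fun q => thetaWedge n m a μ q ws) p (X p)
      = ∑ j, fderiv ℝ (fun q => thetaVec n m a q (ws j)) p (X p) * thetaWedgeCofactor μ j ws := by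
    simp only [thetaWedge_eq_sum]
    rw [fderiv_fun_sum fun j _ => (differentiable_thetaVec a (ws j) p).mul_const _]
    simp [fderiv_mul_const (differentiable_thetaVec a _ p), mul_comm]
  simp only [lieForm, hderiv, thetaWedge_update_of_isContactVector a μ hw,
    ← Finset.sum_add_distrib, ← add_mul, hX a _ (hw _), zero_mul, Finset.sum_const_zero]

theorem differentiable_thetaWedge (a : Fin m) (μ : Fin (n + 1)) (vs : Fin (n + 1) → Jet1 n m) :
    Differentiable ℝ fun q => thetaWedge n m a μ q vs := by
  simp only [thetaWedge_eq_sum]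
  exact Differentiable.fun_sum fun j _ => (differentiable_thetaVec a (vs j)).mul_const _

/-- The part `(∂L/∂y^a_μ) θ^a ∧ d^n x_μ` of `Θ_L`, which lies in the contact ideal. -/
noncomputable def contactPart (L : Jet1 n m → ℝ) (p : Jet1 n m) (vs : Fin (n + 1) → Jet1 n m) : ℝ :=
  ∑ a, ∑ μ, fderiv ℝ L p (Pi.single (Sum.inr (Sum.inr (a, μ))) 1) * thetaWedge n m a μ p vs

theorem pcForm_eq_contactPart_add_lagForm (L : Jet1 n m → ℝ) :
    pcForm n m L = fun p vs => contactPart L p vs + lagForm n m L p vs :=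
  rfl

theorem differentiable_contactPart {L : Jet1 n m → ℝ} (hL : ContDiff ℝ 2 L)
    (vs : Fin (n + 1) → Jet1 n m) : Differentiable ℝ fun q => contactPart L q vs :=
  Differentiable.fun_sum fun a _ => Differentiable.fun_sum fun μ _ =>
    (differentiable_fderiv_apply hL _).mul (differentiable_thetaWedge a μ vs)

theorem IsInfinitesimalContact.lieForm_contactPart (hX : IsInfinitesimalContact X p)
    {L : Jet1 n m → ℝ} (hL : ContDiff ℝ 2 L) (hw : ∀ j, IsContactVector p (ws j)) :
    lieForm n m X (contactPart L) p ws = 0 := by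
  have hdL (a : Fin m) (μ : Fin (n + 1)) := differentiable_fderiv_apply hL
    (Pi.single (Sum.inr (Sum.inr (a, μ))) 1) p
  have hθ (a : Fin m) (μ : Fin (n + 1)) := differentiable_thetaWedge a μ ws p
  unfold contactPart
  rw [lieForm_sum _ fun a _ => DifferentiableAt.fun_sum fun μ _ => (hdL a μ).mul (hθ a μ)]
  refine Finset.sum_eq_zero fun a _ => ?_
  rw [lieForm_sum _ fun μ _ => (hdL a μ).mul (hθ a μ)]
  refine Finset.sum_eq_zero fun μ _ => ?_
  rw [lieForm_mul (hdL a μ) (hθ a μ), thetaWedge_eq_zero_of_isContactVector a μ hw,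
    hX.lieForm_thetaWedge a μ hw, mul_zero, mul_zero, add_zero]

theorem IsInfinitesimalContact.lieForm_pcForm (hX : IsInfinitesimalContact X p)
    {L : Jet1 n m → ℝ} (hL : ContDiff ℝ 2 L) (hw : ∀ j, IsContactVector p (ws j)) :
    lieForm n m X (pcForm n m L) p ws = lieForm n m X (lagForm n m L) p ws := by
  have hlag : DifferentiableAt ℝ (fun q => lagForm n m L q ws) p :=
    (hL.differentiable two_ne_zero p).mul_const _
  rw [pcForm_eq_contactPart_add_lagForm, lieForm_add (differentiable_contactPart hL ws p) hlag,
    hX.lieForm_contactPart hL hw, zero_add]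

end Contact

section Prolongation

variable {n m : ℕ}

theorem fderiv_comp_pr10 {g : YC n m → ℝ} {p : Jet1 n m}
    (hg : DifferentiableAt ℝ g (pr10 n m p)) (w : Jet1 n m) :
    fderiv ℝ (fun q => g (pr10 n m q)) p w = fderiv ℝ g (pr10 n m p) (pr10 n m w) := by
  let P : Jet1 n m →L[ℝ] YC n m := ContinuousLinearMap.pi fun i =>
    ContinuousLinearMap.proj (Sum.elim Sum.inl (fun a => Sum.inr (Sum.inl a)) i)
  have hP : HasFDerivAt (pr10 n m) P p := P.hasFDerivAt
  exact congrArg (· w) (hg.hasFDerivAt.comp p hP).fderiv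

theorem differentiable_pr10 : Differentiable ℝ (pr10 n m) := by
  unfold pr10
  fun_prop

theorem differentiable_totalDY (ν : Fin (n + 1)) {g : YC n m → ℝ} (hg : ContDiff ℝ 2 g) :
    Differentiable ℝ (totalDY n m ν g) := by
  have hdg (v : YC n m) : Differentiable ℝ fun p => fderiv ℝ g (pr10 n m p) v :=
    (differentiable_fderiv_apply hg v).comp differentiable_pr10
  unfold totalDY
  fun_prop

theorem differentiable_prolongY {Z : YC n m → YC n m} (hZ : ContDiff ℝ 2 Z) :
    Differentiable ℝ (prolongY n m Z) := by
  have hZi (i : Fin (n + 1) ⊕ Fin m) : ContDiff ℝ 2 fun y => Z y i := contDiff_pi.1 hZ i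
  have hbase (i : Fin (n + 1) ⊕ Fin m) : Differentiable ℝ fun p => Z (pr10 n m p) i :=
    ((hZi i).differentiable two_ne_zero).comp differentiable_pr10
  have htotal (ν : Fin (n + 1)) (i : Fin (n + 1) ⊕ Fin m) :
      Differentiable ℝ (totalDY n m ν fun y => Z y i) := differentiable_totalDY ν (hZi i)
  refine differentiable_pi.2 fun i => ?_
  rcases i with μ | a | ⟨a, ν⟩
  · exact hbase _
  · exact hbase _
  · simp only [prolongY, Sum.elim_inr]
    fun_prop

theorem IsContactVector.fderiv_pr10 {p w : Jet1 n m} (hw : IsContactVector p w)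
    (g : YC n m → ℝ) :
    fderiv ℝ g (pr10 n m p) (pr10 n m w) = ∑ ν, w (Sum.inl ν) * totalDY n m ν g p := by
  rw [map_eq_sum_mul_map_single, Fintype.sum_sum_type]
  simp only [pr10, Sum.elim_inl, Sum.elim_inr, hw.fiber_eq, totalDY, mul_add,
    Finset.sum_add_distrib, Finset.sum_mul, Finset.mul_sum]
  rw [Finset.sum_comm]
  congr! 3
  ring

theorem fderiv_prolongY_inl {Z : YC n m → YC n m} (hZ : ContDiff ℝ 2 Z) {p w : Jet1 n m}
    (hw : IsContactVector p w) (μ : Fin (n + 1)) :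
    fderiv ℝ (prolongY n m Z) p w (Sum.inl μ)
      = ∑ ν, w (Sum.inl ν) * totalDY n m ν (fun y => Z y (Sum.inl μ)) p := by
  have hcoord := congrArg (· w) (fderiv_apply (differentiable_prolongY hZ p) (Sum.inl μ))
  rw [← hw.fderiv_pr10, ← fderiv_comp_pr10
    ((contDiff_pi.1 hZ (Sum.inl μ)).differentiable two_ne_zero _)]
  exact hcoord.symm

theorem fderiv_prolongY_inr_inl {Z : YC n m → YC n m} (hZ : ContDiff ℝ 2 Z) {p w : Jet1 n m}
    (hw : IsContactVector p w) (a : Fin m) :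
    fderiv ℝ (prolongY n m Z) p w (Sum.inr (Sum.inl a))
      = ∑ ν, w (Sum.inl ν) * totalDY n m ν (fun y => Z y (Sum.inr a)) p := by
  have hcoord := congrArg (· w) (fderiv_apply (differentiable_prolongY hZ p) (Sum.inr (Sum.inl a)))
  rw [← hw.fderiv_pr10, ← fderiv_comp_pr10
    ((contDiff_pi.1 hZ (Sum.inr a)).differentiable two_ne_zero _)]
  exact hcoord.symm

theorem isInfinitesimalContact_prolongY {Z : YC n m → YC n m} (hZ : ContDiff ℝ 2 Z)
    (p : Jet1 n m) : IsInfinitesimalContact (prolongY n m Z) p := by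
  intro a w hw
  rw [fderiv_thetaVec, thetaVec, fderiv_prolongY_inr_inl hZ hw]
  simp only [fderiv_prolongY_inl hZ hw, prolongY, Sum.elim_inr, sub_mul, Finset.sum_sub_distrib,
    Finset.sum_mul, Finset.mul_sum]
  rw [Finset.sum_comm (f := fun μ ν => p (Sum.inr (Sum.inr (a, μ))) *
    (w (Sum.inl ν) * totalDY n m ν (fun y => Z y (Sum.inl μ)) p)), neg_sub,
    sub_add_sub_comm, sub_eq_zero, add_comm]
  exact congrArg₂ (· + ·) (Finset.sum_congr rfl fun ν _ => mul_comm _ _)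
    (Finset.sum_congr rfl fun ν _ => Finset.sum_congr rfl fun μ _ => by ring)

end Prolongation

section Sections

variable {n m : ℕ} {φ : Base n → Fin m → ℝ}

theorem differentiable_jetProlong (hφ : ContDiff ℝ 2 φ) : Differentiable ℝ (jetProlong n m φ) := by
  have hφa (a : Fin m) : ContDiff ℝ 2 fun x => φ x a := contDiff_pi.1 hφ a
  refine differentiable_pi.2 fun i => ?_
  rcases i with μ | a | ⟨a, μ⟩
  · exact differentiable_apply μ
  · exact (hφa a).differentiable two_ne_zero
  · exact differentiable_fderiv_apply (hφa a) _

theorem isContactVector_fderiv_jetProlong {x : Base n}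
    (hφ : DifferentiableAt ℝ (jetProlong n m φ) x) (v : Base n) :
    IsContactVector (jetProlong n m φ x) (fderiv ℝ (jetProlong n m φ) x v) := by
  intro a
  have hcoord (i : Idx n m) : fderiv ℝ (jetProlong n m φ) x v i
      = fderiv ℝ (fun x' => jetProlong n m φ x' i) x v :=
    (congrArg (· v) (fderiv_apply hφ i)).symm
  have hbase (μ : Fin (n + 1)) : fderiv ℝ (jetProlong n m φ) x v (Sum.inl μ) = v μ := by
    rw [hcoord]
    exact congrArg (· v)
      (ContinuousLinearMap.proj (R := ℝ) (φ := fun _ : Fin (n + 1) => ℝ) μ).fderiv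
  have hfiber : fderiv ℝ (jetProlong n m φ) x v (Sum.inr (Sum.inl a))
      = ∑ μ, v μ * fderiv ℝ (fun x' => φ x' a) x (Pi.single μ 1) := by
    rw [hcoord]
    exact map_eq_sum_mul_map_single _ v
  simp [thetaVec, hbase, hfiber, jetProlong, mul_comm]

/-- The pullback `(j¹φ)*ω` to the base of a form `ω` on `J¹π`. -/
noncomputable def jetPullback {k : ℕ} (φ : Base n → Fin m → ℝ)
    (ω : Jet1 n m → (Fin k → Jet1 n m) → ℝ) (x : Base n) (vs : Fin k → Base n) : ℝ :=
  ω (jetProlong n m φ x) fun j => fderiv ℝ (jetProlong n m φ) x (vs j)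

/-- The vector field `W` satisfies `(j¹φ)*(W ⌟ Φ) = 0` for every reaction form `Φ ∈ F`. -/
def IsAdmissibleVariation (F : Set (Jet1 n m → (Fin (n + 1) → Jet1 n m) → ℝ))
    (φ : Base n → Fin m → ℝ) (W : Jet1 n m → Jet1 n m) : Prop :=
  ∀ Φ ∈ F, ∀ x vs, jetPullback φ (contractForm W Φ) x vs = 0

/-- The nonholonomic field equations: `(j¹φ)*(W ⌟ Ω_L) = 0` for every admissible variation `W`.
The constraint that `j¹φ` takes values in `𝒞` is not part of this notion. -/
def IsNonholonomicSolution (L : Jet1 n m → ℝ)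
    (F : Set (Jet1 n m → (Fin (n + 1) → Jet1 n m) → ℝ)) (φ : Base n → Fin m → ℝ) : Prop :=
  ∀ W, IsAdmissibleVariation F φ W →
    ∀ x vs, jetPullback φ (contractForm W (pcOmega n m L)) x vs = 0

variable {L : Jet1 n m → ℝ} {Z : YC n m → YC n m}
  {F : Set (Jet1 n m → (Fin (n + 1) → Jet1 n m) → ℝ)}

theorem dform_momentumMap (hL : ContDiff ℝ 2 L) (hZ : ContDiff ℝ 2 Z) (p : Jet1 n m)
    (vs : Fin (n + 1) → Jet1 n m) :
    dform n m n (momentumMap n m L Z) p vs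
      = lieForm n m (prolongY n m Z) (pcForm n m L) p vs
        + contractForm (prolongY n m Z) (pcOmega n m L) p vs := by
  have hcartan := dform_contractForm (differentiable_poincareCartanForm hL p)
    (differentiable_prolongY hZ p) vs
  rw [coe_poincareCartanForm] at hcartan
  exact hcartan

theorem nonholonomic_momentum_equation (hL : ContDiff ℝ 2 L) (hZ : ContDiff ℝ 2 Z)
    (hφ : ContDiff ℝ 2 φ) (hsol : IsNonholonomicSolution L F φ)
    (hadm : IsAdmissibleVariation F φ (prolongY n m Z)) (x : Base n) (vs : Fin (n + 1) → Base n) :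
    jetPullback φ (dform n m n (momentumMap n m L Z)) x vs
      = jetPullback φ (lieForm n m (prolongY n m Z) (lagForm n m L)) x vs := by
  have htangent (j : Fin (n + 1)) := isContactVector_fderiv_jetProlong
    (differentiable_jetProlong hφ x) (vs j)
  have hfield := hsol _ hadm x vs
  unfold jetPullback at hfield ⊢
  rw [dform_momentumMap hL hZ, hfield, add_zero,
    (isInfinitesimalContact_prolongY hZ _).lieForm_pcForm hL htangent]

theorem horizontal_symmetry_conservation_law_general (hL : ContDiff ℝ 2 L) (hZ : ContDiff ℝ 2 Z)
    (hφ : ContDiff ℝ 2 φ) (hsol : IsNonholonomicSolution L F φ)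
    (hadm : IsAdmissibleVariation F φ (prolongY n m Z))
    (hinv : ∀ x vs, jetPullback φ (lieForm n m (prolongY n m Z) (lagForm n m L)) x vs = 0)
    (x : Base n) (vs : Fin (n + 1) → Base n) :
    jetPullback φ (dform n m n (momentumMap n m L Z)) x vs = 0 :=
  (nonholonomic_momentum_equation hL hZ hφ hsol hadm x vs).trans (hinv x vs)

end Sections

/-- **Conservation law for horizontal nonholonomic symmetries.**
Let `ξ ∈ 𝔤` be a horizontal nonholonomic symmetry (a constant section of `𝔤^F`), i.e.
`j¹ξ_Y ⌟ Φ = 0` on all of `𝒞` for all `Φ ∈ F`, whose action moreover leaves the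
Lagrangian form invariant, `𝓛_{j¹ξ_Y}(L·η) = 0`.  Then for any solution `φ` of the
nonholonomic field equations (with prolongation in `𝒞`), the associated momentum
`J^{n.h.}_ξ = j¹ξ_Y ⌟ Θ_L` is conserved: `(j¹φ)*(d J^{n.h.}_ξ) = 0`. -/
theorem horizontal_symmetry_conservation_law (n m d : ℕ)
    (L : Jet1 n m → ℝ) (hL : ContDiff ℝ (⊤ : ℕ∞) L)
    (act : (Fin d → ℝ) → YC n m → YC n m)
    (ξ : Fin d → ℝ)
    (ξY : YC n m → YC n m) (hξ : ∀ y, ξY y = act ξ y)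
    (hs : ContDiff ℝ (⊤ : ℕ∞) ξY)
    (C : Set (Jet1 n m))
    (F : Set (Jet1 n m → (Fin (n + 1) → Jet1 n m) → ℝ))
    (hsym : ∀ (γ : Jet1 n m), γ ∈ C → ∀ Φ ∈ F, ∀ vs : Fin n → Jet1 n m,
      Φ γ (Fin.cons (prolongY n m ξY γ) vs) = 0)
    (hinv : ∀ (p : Jet1 n m) (vs : Fin (n + 1) → Jet1 n m),
      lieForm n m (prolongY n m ξY) (lagForm n m L) p vs = 0)
    (φ : Base n → Fin m → ℝ) (hφ : ContDiff ℝ (⊤ : ℕ∞) φ)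
    (hC : ∀ x, jetProlong n m φ x ∈ C)
    (hsol : ∀ W : Jet1 n m → Jet1 n m,
      (∀ Φ ∈ F, ∀ (x : Base n) (vs : Fin n → Base n),
        Φ (jetProlong n m φ x)
          (Fin.cons (W (jetProlong n m φ x))
            (fun k => fderiv ℝ (jetProlong n m φ) x (vs k))) = 0) →
      ∀ (x : Base n) (vs : Fin (n + 1) → Base n),
        pcOmega n m L (jetProlong n m φ x)
          (Fin.cons (W (jetProlong n m φ x))
            (fun k => fderiv ℝ (jetProlong n m φ) x (vs k))) = 0) :
    ∀ (x : Base n) (vs : Fin (n + 1) → Base n),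
      dform n m n (momentumMap n m L ξY) (jetProlong n m φ x)
          (fun k => fderiv ℝ (jetProlong n m φ) x (vs k)) = 0 := by
  have hle : (2 : WithTop ℕ∞) ≤ ((⊤ : ℕ∞) : WithTop ℕ∞) := WithTop.coe_le_coe.2 (le_top (a := 2))
  exact horizontal_symmetry_conservation_law_general (hL.of_le hle) (hs.of_le hle) (hφ.of_le hle)
    hsol (fun Φ hΦ x vs => hsym _ (hC x) Φ hΦ _) fun x vs => hinv _ _
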